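/- arXiv:1804.05511 — 3 statements merged into one kernel-verified Lean document; each statement's English description precedes it below -/
import Mathlib

section
/- Let (Z,E) be a 2-partition with Z refining {V1,V2,V3}, and let G be a partition of the edge set of the complete bipartite graph V1 × V2 such that E_3 ≺_δ G. If (Z,E) is ⟨δ⟩-good, then there exists G ∈ G such that the vertex partition Z_1 ∪ Z_2 is a ⟨3δ⟩-regular partition of the bipartite graph G. -/
open scoped Classical

noncomputable section

/-- The number of edges of a bipartite graph `G` between vertex subsets `A` and `B`. -/
def bmEdges {α β : Type*} (G : Finset (α × β)) (A : Finset α) (B : Finset β) : ℕ :=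
  (G.filter fun p => p.1 ∈ A ∧ p.2 ∈ B).card

/-- The edge density of a bipartite graph `G` between `A` and `B`. -/
def bmDens {α β : Type*} (G : Finset (α × β)) (A : Finset α) (B : Finset β) : ℝ :=
  (bmEdges G A B : ℝ) / ((A.card : ℝ) * (B.card : ℝ))

/-- `⟨δ⟩`-regularity of a bipartite graph `G` on vertex classes `(A, B)`:
for all `A' ⊆ A`, `B' ⊆ B` with `|A'| ≥ δ|A|`, `|B'| ≥ δ|B|` we have
`d_G(A',B') ≥ (1/2) d_G(A,B)`. -/
def DeltaReg {α β : Type*} (δ : ℝ) (G : Finset (α × β)) (A : Finset α) (B : Finset β) : Prop :=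
  ∀ A' ⊆ A, ∀ B' ⊆ B, δ * (A.card : ℝ) ≤ (A'.card : ℝ) → δ * (B.card : ℝ) ≤ (B'.card : ℝ) →
    bmDens G A' B' ≥ (1 / 2) * bmDens G A B

/-- Szemerédi `ε`-regularity of a bipartite graph on `(A, B)`. -/
def SzReg {α β : Type*} (ε : ℝ) (G : Finset (α × β)) (A : Finset α) (B : Finset β) : Prop :=
  ∀ A' ⊆ A, ∀ B' ⊆ B, ε * (A.card : ℝ) ≤ (A'.card : ℝ) → ε * (B.card : ℝ) ≤ (B'.card : ℝ) →
    |bmDens G A' B' - bmDens G A B| ≤ ε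

/-- `P` is a partition of the finite set `S` (into nonempty parts). -/
def IsPartition {α : Type*} (P : Finset (Finset α)) (S : Finset α) : Prop :=
  (∀ p ∈ P, p.Nonempty) ∧ (∀ p ∈ P, p ⊆ S) ∧ ∀ v ∈ S, ∃! p, p ∈ P ∧ v ∈ p

/-- `Q` refines `P`: every member of `Q` is contained in a member of `P`. -/
def Refines {α : Type*} (Q P : Finset (Finset α)) : Prop :=
  ∀ q ∈ Q, ∃ p ∈ P, q ⊆ p

/-- All parts of `P` have the same size. -/
def EquitableParts {α : Type*} (P : Finset (Finset α)) : Prop :=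
  ∀ p ∈ P, ∀ q ∈ P, p.card = q.card

/-- `S ⊆_β T`, i.e. `|S \ T| < β |S|`. -/
def ApproxSub {α : Type*} [DecidableEq α] (β' : ℝ) (S T : Finset α) : Prop :=
  ((S \ T).card : ℝ) < β' * (S.card : ℝ)

/-- `S ∈_β P`, i.e. `S ⊆_β p` for some `p ∈ P`. -/
def ApproxMem {α : Type*} [DecidableEq α] (β' : ℝ) (S : Finset α) (P : Finset (Finset α)) :
    Prop :=
  ∃ p ∈ P, ApproxSub β' S p

/-- `Q ≺_β P` for partitions `Q`, `P` of the set `S`. -/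
def ApproxRefines {α : Type*} [DecidableEq α] (β' : ℝ) (Q P : Finset (Finset α))
    (S : Finset α) : Prop :=
  ∑ q ∈ Q.filter fun q => ¬ ApproxMem β' q P, (q.card : ℝ) ≤ β' * (S.card : ℝ)

/-- The vertex partition `P ∪ Q` of a bipartite graph `G` on vertex classes `(L, R)` is
`⟨δ⟩`-regular: one can add/remove at most `δ·e(G)` edges so that the bipartite graph induced
on each pair of distinct parts is `⟨δ⟩`-regular. -/
def DeltaRegPartition {α β : Type*} [DecidableEq α] [DecidableEq β]
    (δ : ℝ) (G : Finset (α × β)) (L : Finset α) (R : Finset β)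
    (P : Finset (Finset α)) (Q : Finset (Finset β)) : Prop :=
  ∃ G' : Finset (α × β), G' ⊆ L ×ˢ R ∧
    ((G' \ G).card : ℝ) + ((G \ G').card : ℝ) ≤ δ * (G.card : ℝ) ∧
    ∀ A ∈ P, ∀ B ∈ Q, DeltaReg δ G' A B

/-- The vertex partition `P ∪ Q` of a bipartite graph `G` is perfectly `⟨δ⟩`-regular:
without modifying any edges, each pair of distinct parts induces a `⟨δ⟩`-regular graph. -/
def PerfectDeltaRegPartition {α β : Type*} (δ : ℝ) (G : Finset (α × β))
    (P : Finset (Finset α)) (Q : Finset (Finset β)) : Prop :=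
  ∀ A ∈ P, ∀ B ∈ Q, DeltaReg δ G A B

/-- A 2-partition `(Z, E)` on the vertex set `S`: `Z` partitions `S`, the members of `E` are
pairwise edge-disjoint bipartite graphs between distinct parts of `Z`, and for all distinct
`Z1, Z2 ∈ Z` the complete bipartite graph `Z1 × Z2` is the union of the members of `E`
between `Z1` and `Z2`. -/
def Is2Partition {α : Type*} [DecidableEq α]
    (Z : Finset (Finset α)) (E : Finset (Finset (α × α))) (S : Finset α) : Prop :=
  IsPartition Z S ∧
  (∀ g ∈ E, ∃ Z1 ∈ Z, ∃ Z2 ∈ Z, Z1 ≠ Z2 ∧ g ⊆ Z1 ×ˢ Z2) ∧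
  (∀ g ∈ E, ∀ g' ∈ E, g ≠ g' → Disjoint g g') ∧
  ∀ Z1 ∈ Z, ∀ Z2 ∈ Z, Z1 ≠ Z2 → ∀ p ∈ Z1 ×ˢ Z2, ∃ g ∈ E, g ⊆ Z1 ×ˢ Z2 ∧ p ∈ g

/-- The parts of `Z` contained in `A` (e.g. `Z_i`, the restriction of `Z` to `V_i`). -/
def partsIn {α : Type*} [DecidableEq α] (Z : Finset (Finset α)) (A : Finset α) :
    Finset (Finset α) :=
  Z.filter fun z => z ⊆ A

/-- The members of `E` contained in `A × B` (e.g. `E_i`). -/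
def graphsIn {α : Type*} [DecidableEq α] (E : Finset (Finset (α × α))) (A B : Finset α) :
    Finset (Finset (α × α)) :=
  E.filter fun g => g ⊆ A ×ˢ B

/-- `H` is a 3-partite 3-graph on the (disjoint) vertex classes `(V1, V2, V3)`. -/
def Is3Partite {α : Type*} (H : Finset (α × α × α)) (V1 V2 V3 : Finset α) : Prop :=
  (Disjoint V1 V2 ∧ Disjoint V1 V3 ∧ Disjoint V2 V3) ∧ H ⊆ V1 ×ˢ V2 ×ˢ V3

/-- The auxiliary bipartite graph `G_H^1` on `(V2 × V3, V1)`. -/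
def GH1 {α : Type*} [DecidableEq α] (H : Finset (α × α × α)) : Finset ((α × α) × α) :=
  H.image fun t => ((t.2.1, t.2.2), t.1)

/-- The auxiliary bipartite graph `G_H^2` on `(V1 × V3, V2)`. -/
def GH2 {α : Type*} [DecidableEq α] (H : Finset (α × α × α)) : Finset ((α × α) × α) :=
  H.image fun t => ((t.1, t.2.2), t.2.1)

/-- The auxiliary bipartite graph `G_H^3` on `(V1 × V2, V3)`. -/
def GH3 {α : Type*} [DecidableEq α] (H : Finset (α × α × α)) : Finset ((α × α) × α) :=
  H.image fun t => ((t.1, t.2.1), t.2.2)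

/-- The 2-partition `(Z, E)` is `⟨δ⟩`-good: every bipartite graph in `E` (between any two
distinct vertex clusters of `Z`) is `⟨δ⟩`-regular. -/
def DeltaGood {α : Type*} [DecidableEq α] (δ : ℝ)
    (Z : Finset (Finset α)) (E : Finset (Finset (α × α))) : Prop :=
  ∀ g ∈ E, ∀ Z1 ∈ Z, ∀ Z2 ∈ Z, Z1 ≠ Z2 → g ⊆ Z1 ×ˢ Z2 → DeltaReg δ g Z1 Z2

/-- `(Z, E)` is a `⟨δ⟩`-regular partition of the 3-partite 3-graph `H` on `(V1, V2, V3)`: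
it is a `⟨δ⟩`-good 2-partition with `Z ≺ {V1, V2, V3}` and, for each `1 ≤ i ≤ 3`,
`E_i ∪ Z_i` is a `⟨δ⟩`-regular vertex partition of `G_H^i`. -/
def Delta3RegPartition {α : Type*} [DecidableEq α] (δ : ℝ) (H : Finset (α × α × α))
    (V1 V2 V3 : Finset α) (Z : Finset (Finset α)) (E : Finset (Finset (α × α))) : Prop :=
  Is2Partition Z E (V1 ∪ V2 ∪ V3) ∧ Refines Z {V1, V2, V3} ∧ DeltaGood δ Z E ∧
  DeltaRegPartition δ (GH1 H) (V2 ×ˢ V3) V1 (graphsIn E V2 V3) (partsIn Z V1) ∧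
  DeltaRegPartition δ (GH2 H) (V1 ×ˢ V3) V2 (graphsIn E V1 V3) (partsIn Z V2) ∧
  DeltaRegPartition δ (GH3 H) (V1 ×ˢ V2) V3 (graphsIn E V1 V2) (partsIn Z V3)

/-- The tower function: `twr 0 = 1` and `twr (x+1) = 2 ^ twr x`. -/
def twr : ℕ → ℕ
  | 0 => 1
  | n + 1 => 2 ^ twr n

/-- The wowzer function: `twr` iterated `x` times, applied to `1`. -/
def wow (x : ℕ) : ℕ := twr^[x] 1

/-- The set of triangles of the triad given by bipartite graphs `e1`, `e2`, `e3`: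
triples `(a, b, c)` with `(a,b) ∈ e1`, `(a,c) ∈ e2` and `(b,c) ∈ e3`. -/
def tri {α β γ : Type*} [DecidableEq α] [DecidableEq β] [DecidableEq γ]
    (e1 : Finset (α × β)) (e2 : Finset (α × γ)) (e3 : Finset (β × γ)) :
    Finset (α × β × γ) :=
  ((e1 ×ˢ e3).filter fun q => q.1.2 = q.2.1 ∧ (q.1.1, q.2.2) ∈ e2).image
    fun q => (q.1.1, q.1.2, q.2.2)

/-- The density `d_H(P)` of a triad `P = (e1, e2, e3)` in the 3-graph `H`. -/
def triDens {α : Type*} [DecidableEq α] (H : Finset (α × α × α))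
    (e1 e2 e3 : Finset (α × α)) : ℝ :=
  ((H ∩ tri e1 e2 e3).card : ℝ) / ((tri e1 e2 e3).card : ℝ)

/-- The triad `(e1, e2, e3)` is `ε`-regular in the 3-graph `H`: every subtriad `(f1, f2, f3)`
with `t(P') ≥ ε t(P)` satisfies `|d_H(P') - d_H(P)| ≤ ε`. -/
def TriadReg {α : Type*} [DecidableEq α] (ε : ℝ) (H : Finset (α × α × α))
    (e1 e2 e3 : Finset (α × α)) : Prop :=
  ∀ f1 ⊆ e1, ∀ f2 ⊆ e2, ∀ f3 ⊆ e3,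
    ε * ((tri e1 e2 e3).card : ℝ) ≤ ((tri f1 f2 f3).card : ℝ) →
    |triDens H f1 f2 f3 - triDens H e1 e2 e3| ≤ ε

/-- The triads of the 2-partition `(Z, E)`: triples of members of `E` forming a tripartite
graph on three distinct parts of `Z`. -/
def triads {α : Type*} [DecidableEq α] (Z : Finset (Finset α))
    (E : Finset (Finset (α × α))) :
    Finset (Finset (α × α) × Finset (α × α) × Finset (α × α)) :=
  (E ×ˢ E ×ˢ E).filter fun e => ∃ Z1 ∈ Z, ∃ Z2 ∈ Z, ∃ Z3 ∈ Z,
    Z1 ≠ Z2 ∧ Z1 ≠ Z3 ∧ Z2 ≠ Z3 ∧ e.1 ⊆ Z1 ×ˢ Z2 ∧ e.2.1 ⊆ Z1 ×ˢ Z3 ∧ e.2.2 ⊆ Z2 ×ˢ Z3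

/-- An `(ℓ, t, ε₂)`-equipartition on `S`: a 2-partition `(Z, E)` where `Z` is an equitable
partition of order `t` and every graph in `E` is `ε₂`-regular of density `ℓ⁻¹ ± ε₂`. -/
def IsEquipartition23 {α : Type*} [DecidableEq α] (ℓ t : ℕ) (ε₂ : ℝ)
    (Z : Finset (Finset α)) (E : Finset (Finset (α × α))) (S : Finset α) : Prop :=
  Is2Partition Z E S ∧ EquitableParts Z ∧ Z.card = t ∧
  ∀ g ∈ E, ∀ Z1 ∈ Z, ∀ Z2 ∈ Z, Z1 ≠ Z2 → g ⊆ Z1 ×ˢ Z2 →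
    SzReg ε₂ g Z1 Z2 ∧ |bmDens g Z1 Z2 - 1 / (ℓ : ℝ)| ≤ ε₂

/-- The `(ℓ,t,ε₂)`-equipartition `(Z, E)` is an `ε`-regular partition of the 3-graph `H`
with vertex set `S` (Frankl–Rödl): `Σ t(P) ≤ ε |S|³`, summed over non-`ε`-regular triads. -/
def FRRegPartition {α : Type*} [DecidableEq α] (ε : ℝ) (H : Finset (α × α × α))
    (S : Finset α) (Z : Finset (Finset α)) (E : Finset (Finset (α × α))) : Prop :=
  ∑ e ∈ (triads Z E).filter fun e => ¬ TriadReg ε H e.1 e.2.1 e.2.2,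
    ((tri e.1 e.2.1 e.2.2).card : ℝ) ≤ ε * (S.card : ℝ) ^ 3

/-- The function `f` from the definition of quasirandomness of a triad. -/
def fQ {α : Type*} [DecidableEq α] (H : Finset (α × α × α)) (e1 e2 e3 : Finset (α × α))
    (x y z : α) : ℝ :=
  if (x, y, z) ∈ tri e1 e2 e3 then
    (if (x, y, z) ∈ H then 1 - triDens H e1 e2 e3 else -triDens H e1 e2 e3)
  else 0

/-- The octahedron sum from the definition of quasirandomness. -/
def octSum {α : Type*} [DecidableEq α] (H : Finset (α × α × α)) (e1 e2 e3 : Finset (α × α))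
    (X Y Z : Finset α) : ℝ :=
  ∑ x0 ∈ X, ∑ x1 ∈ X, ∑ y0 ∈ Y, ∑ y1 ∈ Y, ∑ z0 ∈ Z, ∑ z1 ∈ Z,
    fQ H e1 e2 e3 x0 y0 z0 * fQ H e1 e2 e3 x0 y0 z1 * fQ H e1 e2 e3 x0 y1 z0 *
      fQ H e1 e2 e3 x0 y1 z1 * fQ H e1 e2 e3 x1 y0 z0 * fQ H e1 e2 e3 x1 y0 z1 *
      fQ H e1 e2 e3 x1 y1 z0 * fQ H e1 e2 e3 x1 y1 z1

/-- The triad `(e1, e2, e3)` on vertex classes `(X, Y, Z)` with `d(e1) = d(e2) = d(e3) = d`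
and `|X| = |Y| = |Z| = n` is `a`-quasirandom in `H`: the octahedron sum is at most
`a d¹² n⁶`. -/
def Quasirandom {α : Type*} [DecidableEq α] (a : ℝ) (H : Finset (α × α × α))
    (e1 e2 e3 : Finset (α × α)) (X Y Z : Finset α) : Prop :=
  ∀ (d : ℝ) (n : ℕ), bmDens e1 X Y = d → bmDens e2 X Z = d → bmDens e3 Y Z = d →
    X.card = n → Y.card = n → Z.card = n →
    octSum H e1 e2 e3 X Y Z ≤ a * d ^ 12 * (n : ℝ) ^ 6

/-- The `(ℓ,t,ε₂)`-equipartition `(Z, E)` is an `a`-quasirandom partition of the 3-graph `H`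
with vertex set `S`: `Σ t(P) ≤ a |S|³`, summed over non-`a`-quasirandom triads. -/
def QuasirandomPartition {α : Type*} [DecidableEq α] (a : ℝ) (H : Finset (α × α × α))
    (S : Finset α) (Z : Finset (Finset α)) (E : Finset (Finset (α × α))) : Prop :=
  ∑ e ∈ (E ×ˢ E ×ˢ E).filter fun e => ∃ Z1 ∈ Z, ∃ Z2 ∈ Z, ∃ Z3 ∈ Z,
      Z1 ≠ Z2 ∧ Z1 ≠ Z3 ∧ Z2 ≠ Z3 ∧
      e.1 ⊆ Z1 ×ˢ Z2 ∧ e.2.1 ⊆ Z1 ×ˢ Z3 ∧ e.2.2 ⊆ Z2 ×ˢ Z3 ∧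
      ¬ Quasirandom a H e.1 e.2.1 e.2.2 Z1 Z2 Z3,
    ((tri e.1 e.2.1 e.2.2).card : ℝ) ≤ a * (S.card : ℝ) ^ 3

/-- `e(i) = 2^(i+10)`. -/
def efn (i : ℕ) : ℕ := 2 ^ (i + 10)

/-- `t(1) = 2^250` and `t(i+1) = 2^(t(i)/e(i))` for `i ≥ 1`. -/
def tfn : ℕ → ℕ
  | 0 => 0
  | 1 => 2 ^ 250
  | n + 2 => 2 ^ (tfn (n + 1) / efn (n + 1))

/-- `w(1) = 1` and `w(i+1) = w*(i) = t(w(i))/e(i)` for `i ≥ 1`. -/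
def wfn : ℕ → ℕ
  | 0 => 0
  | 1 => 1
  | n + 2 => tfn (wfn (n + 1)) / efn (n + 1)

/-- `w*(s) = t(w(s))/e(s)`. -/
def wstar (s : ℕ) : ℕ := tfn (wfn s) / efn s

end

lemma bmEdges_eq_zero {α : Type*} (e : Finset (α × α)) (A B : Finset α)
    (h : ∀ p ∈ e, p.1 ∈ A → p.2 ∈ B → False) : bmEdges e A B = 0 := by
  unfold bmEdges
  rw [Finset.card_eq_zero, Finset.filter_eq_empty_iff]
  rintro p hp ⟨hpA, hpB⟩
  exact h p hp hpA hpB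

lemma bmEdges_biUnion {α : Type*} [DecidableEq α] (S : Finset (Finset (α × α)))
    (hS : ∀ g ∈ S, ∀ g' ∈ S, g ≠ g' → Disjoint g g') (A B : Finset α) :
    bmEdges (S.biUnion id) A B = ∑ e ∈ S, bmEdges e A B := by
  unfold bmEdges
  rw [← Finset.card_biUnion]
  · congr 1
    ext p
    simp only [Finset.mem_filter, Finset.mem_biUnion, id]
    tauto
  · intro g hg g' hg' hne
    rw [Function.onFun, Finset.disjoint_left]
    intro p hp hp'
    simp only [Finset.mem_filter] at hp hp'
    exact Finset.disjoint_left.1 (hS g hg g' hg' hne) hp.1 hp'.1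

lemma bmDens_biUnion {α : Type*} [DecidableEq α] (S : Finset (Finset (α × α)))
    (hS : ∀ g ∈ S, ∀ g' ∈ S, g ≠ g' → Disjoint g g') (A B : Finset α) :
    bmDens (S.biUnion id) A B = ∑ e ∈ S, bmDens e A B := by
  unfold bmDens
  rw [bmEdges_biUnion S hS, Nat.cast_sum, Finset.sum_div]

lemma bmDens_nonneg' {α : Type*} (e : Finset (α × α)) (A B : Finset α) :
    0 ≤ bmDens e A B := by
  unfold bmDens; positivity

lemma partition_sum_card {α : Type*} [DecidableEq α] (G : Finset (Finset α)) (S : Finset α)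
    (hG : IsPartition G S) : ∑ g ∈ G, (g.card : ℝ) = S.card := by
  obtain ⟨_, h2, h3⟩ := hG
  rw [← Nat.cast_sum, ← Finset.card_biUnion]
  · congr 2
    ext p
    simp only [Finset.mem_biUnion]
    constructor
    · rintro ⟨g, hg, hp⟩
      exact h2 g hg hp
    · intro hp
      obtain ⟨g, hg, -⟩ := h3 p hp
      exact ⟨g, hg.1, hg.2⟩
  · intro g hg g' hg' hne
    rw [Function.onFun, Finset.disjoint_left]
    intro p hp hp'
    exact hne ((h3 p (h2 g hg hp)).unique ⟨hg, hp⟩ ⟨hg', hp'⟩)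

lemma unique_part {α : Type*} {Z : Finset (Finset α)} {S : Finset α} (hZ : IsPartition Z S)
    {A B : Finset α} (hA : A ∈ Z) (hB : B ∈ Z) {v : α} (ha : v ∈ A) (hb : v ∈ B) : A = B :=
  (hZ.2.2 v (hZ.2.1 A hA ha)).unique ⟨hA, ha⟩ ⟨hB, hb⟩

/-- **Claim 3.3.** -/
theorem uniform_refinement {α : Type*} [DecidableEq α]
    (V1 V2 V3 : Finset α)
    (hd12 : Disjoint V1 V2) (hd13 : Disjoint V1 V3) (hd23 : Disjoint V2 V3)
    (hV1 : V1.Nonempty) (hV2 : V2.Nonempty)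
    (Z : Finset (Finset α)) (E : Finset (Finset (α × α)))
    (h2p : Is2Partition Z E (V1 ∪ V2 ∪ V3)) (hZref : Refines Z {V1, V2, V3})
    (G : Finset (Finset (α × α))) (hG : IsPartition G (V1 ×ˢ V2))
    (δ : ℝ) (href : ApproxRefines δ (graphsIn E V1 V2) G (V1 ×ˢ V2))
    (hgood : DeltaGood δ Z E) :
    ∃ g ∈ G, DeltaRegPartition (3 * δ) g V1 V2 (partsIn Z V1) (partsIn Z V2) := by
  have hZ := h2p.1
  obtain ⟨-, hE1, hE2, hE3⟩ := h2p
  set F := graphsIn E V1 V2 with hF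
  have hFE : ∀ e ∈ F, e ∈ E ∧ e ⊆ V1 ×ˢ V2 := by
    intro e he; simpa [hF, graphsIn] using he
  have hFd : ∀ g ∈ F, ∀ g' ∈ F, g ≠ g' → Disjoint g g' := fun g hg g' hg' h =>
    hE2 g (hFE g hg).1 g' (hFE g' hg').1 h
  have hcov : ∀ p ∈ V1 ×ˢ V2, ∃ e ∈ F, p ∈ e := by
    rintro ⟨a, b⟩ hp
    obtain ⟨ha, hb⟩ := Finset.mem_product.1 hp
    simp only at ha hb
    obtain ⟨A, ⟨hA, haA⟩, -⟩ := hZ.2.2 a (by simp [ha])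
    obtain ⟨B, ⟨hB, hbB⟩, -⟩ := hZ.2.2 b (by simp [hb])
    have hAV : A ⊆ V1 := by
      obtain ⟨p, hp, hs⟩ := hZref A hA
      simp only [Finset.mem_insert, Finset.mem_singleton] at hp
      rcases hp with rfl | rfl | rfl
      · exact hs
      · exact absurd (hs haA) (Finset.disjoint_left.1 hd12 ha)
      · exact absurd (hs haA) (Finset.disjoint_left.1 hd13 ha)
    have hBV : B ⊆ V2 := by
      obtain ⟨p, hp, hs⟩ := hZref B hB
      simp only [Finset.mem_insert, Finset.mem_singleton] at hp
      rcases hp with rfl | rfl | rfl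
      · exact absurd hb (Finset.disjoint_left.1 hd12 (hs hbB))
      · exact hs
      · exact absurd (hs hbB) (Finset.disjoint_left.1 hd23 hb)
    have hne : A ≠ B := by
      rintro rfl
      exact Finset.disjoint_left.1 hd12 ha (hBV haA)
    obtain ⟨e, he, hes, hpe⟩ := hE3 A hA B hB hne (a, b) (Finset.mem_product.2 ⟨haA, hbB⟩)
    refine ⟨e, ?_, hpe⟩
    rw [hF, graphsIn, Finset.mem_filter]
    exact ⟨he, hes.trans (Finset.product_subset_product hAV hBV)⟩
  have hNpos : (0 : ℝ) < ((V1 ×ˢ V2).card : ℝ) := by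
    exact_mod_cast (hV1.product hV2).card_pos
  have hδ : 0 ≤ δ := by
    have h0 : 0 ≤ δ * ((V1 ×ˢ V2).card : ℝ) :=
      le_trans (Finset.sum_nonneg (fun _ _ => Nat.cast_nonneg _)) href
    exact nonneg_of_mul_nonneg_left h0 hNpos
  set good := F.filter (fun e => ApproxMem δ e G) with hgooddef
  set bad := F.filter (fun e => ¬ ApproxMem δ e G) with hbaddef
  have hex : ∀ e, ∃ g, e ∈ good → g ∈ G ∧ ApproxSub δ e g := by
    intro e
    by_cases he : e ∈ good
    · obtain ⟨g, hg, h⟩ := (Finset.mem_filter.1 he).2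
      exact ⟨g, fun _ => ⟨hg, h⟩⟩
    · exact ⟨∅, fun h => absurd h he⟩
  choose Φ hΦ using hex
  set S : Finset (α × α) → Finset (Finset (α × α)) := fun g => good.filter (fun e => Φ e = g)
    with hSdef
  have hSF : ∀ g, ∀ e ∈ S g, e ∈ F := fun g e he =>
    (Finset.mem_filter.1 (Finset.mem_filter.1 he).1).1
  have hbadc : ∑ e ∈ bad, (e.card : ℝ) ≤ δ * ((V1 ×ˢ V2).card : ℝ) := href
  have hgoodc : ∑ e ∈ good, ((e \ Φ e).card : ℝ) ≤ δ * ((V1 ×ˢ V2).card : ℝ) := by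
    calc ∑ e ∈ good, ((e \ Φ e).card : ℝ) ≤ ∑ e ∈ good, δ * (e.card : ℝ) :=
          Finset.sum_le_sum (fun e he => (hΦ e he).2.le)
      _ = δ * ∑ e ∈ good, (e.card : ℝ) := by rw [Finset.mul_sum]
      _ ≤ δ * ((V1 ×ˢ V2).card : ℝ) := by
          refine mul_le_mul_of_nonneg_left ?_ hδ
          rw [← Nat.cast_sum, ← Finset.card_biUnion]
          · refine Nat.cast_le.2 (Finset.card_le_card ?_)
            refine Finset.biUnion_subset.2 fun e he => ?_
            exact (hFE e (Finset.mem_filter.1 he).1).2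
          · intro e he e' he' hne
            exact hFd e (Finset.mem_filter.1 he).1 e' (Finset.mem_filter.1 he').1 hne
  have hadd : ∑ g ∈ G, ((((S g).biUnion id) \ g).card : ℝ) ≤ δ * ((V1 ×ˢ V2).card : ℝ) := by
    refine le_trans ?_ hgoodc
    rw [← Finset.sum_fiberwise_of_maps_to (s := good) (t := G) (g := Φ)
      (fun e he => (hΦ e he).1)]
    refine Finset.sum_le_sum fun g _ => ?_
    have h1 : ((S g).biUnion id) \ g ⊆ (S g).biUnion (fun e => e \ Φ e) := by
      intro p hp
      obtain ⟨hp1, hp2⟩ := Finset.mem_sdiff.1 hp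
      obtain ⟨e, he, hpe⟩ := Finset.mem_biUnion.1 hp1
      refine Finset.mem_biUnion.2 ⟨e, he, Finset.mem_sdiff.2 ⟨hpe, ?_⟩⟩
      rw [(Finset.mem_filter.1 he).2]
      exact hp2
    have h2 := (Finset.card_le_card h1).trans Finset.card_biUnion_le
    exact_mod_cast h2
  have hrem : ∑ g ∈ G, ((g \ ((S g).biUnion id)).card : ℝ)
      ≤ 2 * δ * ((V1 ×ˢ V2).card : ℝ) := by
    have h1 : G.biUnion (fun g => g \ ((S g).biUnion id)) ⊆
        bad.biUnion id ∪ good.biUnion (fun e => e \ Φ e) := by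
      intro p hp
      obtain ⟨g, hg, hpg⟩ := Finset.mem_biUnion.1 hp
      obtain ⟨hp1, hp2⟩ := Finset.mem_sdiff.1 hpg
      obtain ⟨e, he, hpe⟩ := hcov p (hG.2.1 g hg hp1)
      by_cases hm : ApproxMem δ e G
      · have heg : e ∈ good := Finset.mem_filter.2 ⟨he, hm⟩
        refine Finset.mem_union_right _ (Finset.mem_biUnion.2
          ⟨e, heg, Finset.mem_sdiff.2 ⟨hpe, fun hpΦ => hp2 ?_⟩⟩)
        have : Φ e = g := unique_part hG (hΦ e heg).1 hg hpΦ hp1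
        exact Finset.mem_biUnion.2 ⟨e, Finset.mem_filter.2 ⟨heg, this⟩, hpe⟩
      · exact Finset.mem_union_left _ (Finset.mem_biUnion.2
          ⟨e, Finset.mem_filter.2 ⟨he, hm⟩, hpe⟩)
    have h2 : ∑ g ∈ G, (g \ ((S g).biUnion id)).card ≤
        ∑ e ∈ bad, e.card + ∑ e ∈ good, (e \ Φ e).card := by
      rw [← Finset.card_biUnion]
      · refine (Finset.card_le_card h1).trans ((Finset.card_union_le _ _).trans ?_)
        exact add_le_add Finset.card_biUnion_le Finset.card_biUnion_le
      · intro g hg g' hg' hne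
        rw [Function.onFun, Finset.disjoint_left]
        intro p hp hp'
        exact hne (unique_part hG hg hg' (Finset.mem_sdiff.1 hp).1 (Finset.mem_sdiff.1 hp').1)
    have h3 : ∑ g ∈ G, ((g \ ((S g).biUnion id)).card : ℝ) ≤
        ∑ e ∈ bad, (e.card : ℝ) + ∑ e ∈ good, ((e \ Φ e).card : ℝ) := by exact_mod_cast h2
    linarith
  have hGne : G.Nonempty := by
    obtain ⟨p, hp⟩ := hV1.product hV2
    obtain ⟨g, hg, -⟩ := hG.2.2 p hp
    exact ⟨g, hg.1⟩
  obtain ⟨g, hg, hcost⟩ := Finset.exists_le_of_sum_le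
    (f := fun g => ((((S g).biUnion id) \ g).card : ℝ) + ((g \ ((S g).biUnion id)).card : ℝ))
    (g := fun g => 3 * δ * (g.card : ℝ)) hGne (by
      rw [Finset.sum_add_distrib, ← Finset.mul_sum, partition_sum_card G _ hG]
      linarith)
  refine ⟨g, hg, (S g).biUnion id, ?_, hcost, ?_⟩
  · exact Finset.biUnion_subset.2 fun e he => (hFE e (hSF g e he)).2
  · intro A hA B hB A' hA' B' hB' hcA hcB
    obtain ⟨hAZ, hAV⟩ := Finset.mem_filter.1 hA
    obtain ⟨hBZ, hBV⟩ := Finset.mem_filter.1 hB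
    have hSd : ∀ e ∈ S g, ∀ e' ∈ S g, e ≠ e' → Disjoint e e' := fun e he e' he' h =>
      hFd e (hSF g e he) e' (hSF g e' he') h
    rw [bmDens_biUnion _ hSd, bmDens_biUnion _ hSd, Finset.mul_sum]
    refine Finset.sum_le_sum fun e he => ?_
    have heE := (hFE e (hSF g e he)).1
    have hne : A ≠ B := by
      rintro rfl
      obtain ⟨a, ha⟩ := hZ.1 A hAZ
      exact Finset.disjoint_left.1 hd12 (hAV ha) (hBV ha)
    have hA0 : (0 : ℝ) ≤ A.card := Nat.cast_nonneg _
    have hB0 : (0 : ℝ) ≤ B.card := Nat.cast_nonneg _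
    by_cases hsub : e ⊆ A ×ˢ B
    · refine hgood e heE A hAZ B hBZ hne hsub A' hA' B' hB' ?_ ?_
      · nlinarith [mul_nonneg hδ hA0]
      · nlinarith [mul_nonneg hδ hB0]
    · have h0 : bmDens e A B = 0 := by
        have : bmEdges e A B = 0 := by
          apply bmEdges_eq_zero
          rintro p hp hpA hpB
          obtain ⟨Z1, hZ1, Z2, hZ2, -, hs⟩ := hE1 e heE
          obtain ⟨h1, h2⟩ := Finset.mem_product.1 (hs hp)
          have e1 := unique_part hZ hAZ hZ1 hpA h1
          have e2 := unique_part hZ hBZ hZ2 hpB h2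
          subst e1 e2
          exact hsub hs
        simp [bmDens, this]
      rw [h0, mul_zero]
      exact bmDens_nonneg' _ _ _
end

section
/- Let Q and P be partitions of the same finite set. If Q ≺_{1/2} P and P is equitable, then |Q| ≥ (1/4)|P|. -/
open scoped Classical

theorem isPartition_sum_card {α : Type*} {P : Finset (Finset α)} {S : Finset α}
    (hP : IsPartition P S) : ∑ p ∈ P, (p.card : ℝ) = (S.card : ℝ) := by
  have hS : S = P.biUnion id := by
    ext v
    simp only [Finset.mem_biUnion, id]
    constructor
    · intro hv
      obtain ⟨p, hp, -⟩ := hP.2.2 v hv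
      exact ⟨p, hp⟩
    · rintro ⟨p, hp, hv⟩
      exact hP.2.1 p hp hv
  have hd : (P : Set (Finset α)).PairwiseDisjoint id := by
    intro p hp q hq hne
    refine Finset.disjoint_left.2 fun v hvp hvq => hne ?_
    exact (hP.2.2 v (hP.2.1 p hp hvp)).unique ⟨hp, hvp⟩ ⟨hq, hvq⟩
  have h := Finset.card_biUnion (s := P) (t := id) hd
  rw [← hS] at h
  rw [h]
  simp

/-- **Claim 3.6.** If `Q ≺_{1/2} P` and `P` is equitable then `|Q| ≥ |P|/4`. -/
theorem approx_refinement_size {α : Type*} [DecidableEq α]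
    (S : Finset α) (Q P : Finset (Finset α))
    (hQ : IsPartition Q S) (hP : IsPartition P S) (hPequi : EquitableParts P)
    (href : ApproxRefines (1 / 2) Q P S) :
    (Q.card : ℝ) ≥ (1 / 4) * (P.card : ℝ) := by
  rcases P.eq_empty_or_nonempty with rfl | ⟨p₀, hp₀⟩
  · simp
  have hm : (0 : ℝ) < p₀.card := by exact_mod_cast (hP.1 p₀ hp₀).card_pos
  have hn : (S.card : ℝ) = P.card * p₀.card := by
    rw [← isPartition_sum_card hP,
      Finset.sum_congr rfl (fun p hp => by rw [hPequi p hp p₀ hp₀]), Finset.sum_const,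
      nsmul_eq_mul]
  have hsplit := Finset.sum_filter_add_sum_filter_not Q (fun q => ApproxMem (1 / 2) q P)
    (fun q => (q.card : ℝ))
  rw [isPartition_sum_card hQ] at hsplit
  have hgood : ∑ q ∈ Q.filter (fun q => ApproxMem (1 / 2) q P), (q.card : ℝ)
      ≤ Q.card * (2 * p₀.card) := by
    have h1 : ∑ q ∈ Q.filter (fun q => ApproxMem (1 / 2) q P), (q.card : ℝ)
        ≤ (Q.filter (fun q => ApproxMem (1 / 2) q P)).card • (2 * (p₀.card : ℝ)) := by
      refine Finset.sum_le_card_nsmul _ _ _ fun q hq => ?_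
      obtain ⟨p, hp, hqp⟩ := (Finset.mem_filter.1 hq).2
      unfold ApproxSub at hqp
      have h2 : ((q \ p).card : ℝ) + (q ∩ p).card = q.card := by
        exact_mod_cast Finset.card_sdiff_add_card_inter q p
      have h3 : ((q ∩ p).card : ℝ) ≤ p₀.card := by
        rw [← hPequi p hp p₀ hp₀]
        exact_mod_cast Finset.card_le_card Finset.inter_subset_right
      linarith
    rw [nsmul_eq_mul] at h1
    refine h1.trans (mul_le_mul_of_nonneg_right ?_ (by positivity))
    exact_mod_cast Finset.card_filter_le _ _
  unfold ApproxRefines at href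
  have key : (P.card : ℝ) * p₀.card ≤ (4 * Q.card) * p₀.card := by
    rw [hn] at hsplit href
    linarith
  have := le_of_mul_le_mul_right key hm
  linarith
end

section
/- There is a constant C ≥ 1 such that the following holds for every 3-graph H and every 0 < ε ≤ 1/2: if a triad P = (E0,E1,E2) on vertex classes of common size, with d(E0) = d(E1) = d(E2), is ε^C-quasirandom in H, and for every 0 ≤ i ≤ 2 the bipartite graph E_i is d(E_i)^C-regular, then P is ε-regular in H. -/
open scoped Classical

/-- Indicator of a bipartite graph. -/
noncomputable def qind {α : Type} (E : Finset (α × α)) (x y : α) : ℝ :=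
  if (x, y) ∈ E then 1 else 0

theorem qind_01 {α : Type} (E : Finset (α × α)) (x y : α) :
    qind E x y = 0 ∨ qind E x y = 1 := by
  unfold qind; split_ifs <;> simp

theorem q_cs {ι : Type*} (s : Finset ι) (a b : ι → ℝ) :
    (∑ i ∈ s, a i * b i) ^ 2 ≤ (∑ i ∈ s, a i ^ 2) * ∑ i ∈ s, b i ^ 2 :=
  Finset.sum_mul_sq_le_sq_mul_sq s a b

theorem q_cs2 {α : Type} (X Y : Finset α) (a b : α → α → ℝ) :
    (∑ x ∈ X, ∑ y ∈ Y, a x y * b x y) ^ 2 ≤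
      (∑ x ∈ X, ∑ y ∈ Y, a x y ^ 2) * ∑ x ∈ X, ∑ y ∈ Y, b x y ^ 2 := by
  have := q_cs (X ×ˢ Y) (fun p => a p.1 p.2) (fun p => b p.1 p.2)
  simpa only [Finset.sum_product] using this

theorem q_cs3 {α : Type} (X Y Z : Finset α) (a b : α → α → α → ℝ) :
    (∑ x ∈ X, ∑ y ∈ Y, ∑ z ∈ Z, a x y z * b x y z) ^ 2 ≤
      (∑ x ∈ X, ∑ y ∈ Y, ∑ z ∈ Z, a x y z ^ 2) *
        ∑ x ∈ X, ∑ y ∈ Y, ∑ z ∈ Z, b x y z ^ 2 := by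
  have := q_cs (X ×ˢ Y ×ˢ Z) (fun p => a p.1 p.2.1 p.2.2) (fun p => b p.1 p.2.1 p.2.2)
  simpa only [Finset.sum_product] using this

theorem q_cs4 {α : Type} (X Y Z W : Finset α) (a b : α → α → α → α → ℝ) :
    (∑ x ∈ X, ∑ y ∈ Y, ∑ z ∈ Z, ∑ w ∈ W, a x y z w * b x y z w) ^ 2 ≤
      (∑ x ∈ X, ∑ y ∈ Y, ∑ z ∈ Z, ∑ w ∈ W, a x y z w ^ 2) *
        ∑ x ∈ X, ∑ y ∈ Y, ∑ z ∈ Z, ∑ w ∈ W, b x y z w ^ 2 := by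
  have := q_cs (X ×ˢ Y ×ˢ Z ×ˢ W) (fun p => a p.1 p.2.1 p.2.2.1 p.2.2.2)
    (fun p => b p.1 p.2.1 p.2.2.1 p.2.2.2)
  simpa only [Finset.sum_product] using this

theorem q_step1 {α : Type} (X Y Z : Finset α) (f : α → α → α → ℝ) (F0 F1 F2 : α → α → ℝ) :
    (∑ x ∈ X, ∑ y ∈ Y, ∑ z ∈ Z, f x y z * F0 x y * F1 x z * F2 y z) ^ 2 ≤
    (∑ x ∈ X, ∑ y ∈ Y, F0 x y ^ 2) *
      ∑ x ∈ X, ∑ z0 ∈ Z, ∑ z1 ∈ Z, (F1 x z0 * F1 x z1) *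
        ∑ y ∈ Y, f x y z0 * f x y z1 * (F2 y z0 * F2 y z1) := by
  have h := q_cs2 X Y F0 (fun x y => ∑ z ∈ Z, f x y z * F1 x z * F2 y z)
  have e1 : (∑ x ∈ X, ∑ y ∈ Y, ∑ z ∈ Z, f x y z * F0 x y * F1 x z * F2 y z) =
      ∑ x ∈ X, ∑ y ∈ Y, F0 x y * ∑ z ∈ Z, f x y z * F1 x z * F2 y z := by
    simp only [Finset.mul_sum]
    refine Finset.sum_congr rfl fun x _ => Finset.sum_congr rfl fun y _ =>
      Finset.sum_congr rfl fun z _ => by ring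
  have e2 : ∑ x ∈ X, ∑ y ∈ Y, (∑ z ∈ Z, f x y z * F1 x z * F2 y z) ^ 2 =
      ∑ x ∈ X, ∑ z0 ∈ Z, ∑ z1 ∈ Z, (F1 x z0 * F1 x z1) *
        ∑ y ∈ Y, f x y z0 * f x y z1 * (F2 y z0 * F2 y z1) := by
    refine Finset.sum_congr rfl fun x _ => ?_
    simp only [pow_two, Finset.sum_mul_sum]
    rw [Finset.sum_comm]
    refine Finset.sum_congr rfl fun z0 _ => ?_
    rw [Finset.sum_comm]
    refine Finset.sum_congr rfl fun z1 _ => ?_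
    rw [Finset.mul_sum]
    refine Finset.sum_congr rfl fun y _ => by ring
  rw [e1, ← e2]; exact h

theorem q_step2 {α : Type} (X Y Z : Finset α) (f : α → α → α → ℝ) (F1 F2 : α → α → ℝ) :
    (∑ x ∈ X, ∑ z0 ∈ Z, ∑ z1 ∈ Z, (F1 x z0 * F1 x z1) *
        ∑ y ∈ Y, f x y z0 * f x y z1 * (F2 y z0 * F2 y z1)) ^ 2 ≤
    (∑ x ∈ X, ∑ z0 ∈ Z, ∑ z1 ∈ Z, (F1 x z0 * F1 x z1) ^ 2) *
      ∑ y0 ∈ Y, ∑ y1 ∈ Y, ∑ z0 ∈ Z, ∑ z1 ∈ Z,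
        (F2 y0 z0 * F2 y0 z1 * F2 y1 z0 * F2 y1 z1) *
        ∑ x ∈ X, f x y0 z0 * f x y0 z1 * f x y1 z0 * f x y1 z1 := by
  refine (q_cs3 X Z Z _ _).trans (le_of_eq ?_)
  congr 1
  have : ∀ x ∈ X, ∑ z0 ∈ Z, ∑ z1 ∈ Z, (∑ y ∈ Y, f x y z0 * f x y z1 * (F2 y z0 * F2 y z1)) ^ 2 =
      ∑ y0 ∈ Y, ∑ y1 ∈ Y, ∑ z0 ∈ Z, ∑ z1 ∈ Z, (F2 y0 z0 * F2 y0 z1 * F2 y1 z0 * F2 y1 z1) *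
        (f x y0 z0 * f x y0 z1 * f x y1 z0 * f x y1 z1) := by
    intro x _
    simp only [pow_two, Finset.sum_mul_sum]
    have a1 : ∀ z0 ∈ Z, ∀ (G : α → α → α → ℝ), ∑ z1 ∈ Z, ∑ y0 ∈ Y, ∑ y1 ∈ Y, G z1 y0 y1 =
        ∑ y0 ∈ Y, ∑ y1 ∈ Y, ∑ z1 ∈ Z, G z1 y0 y1 := by
      intro z0 _ G
      rw [Finset.sum_comm]
      exact Finset.sum_congr rfl fun y0 _ => Finset.sum_comm
    rw [Finset.sum_congr rfl fun z0 hz => a1 z0 hz _, Finset.sum_comm]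
    refine Finset.sum_congr rfl fun y0 _ => ?_
    rw [Finset.sum_comm]
    refine Finset.sum_congr rfl fun y1 _ => Finset.sum_congr rfl fun z0 _ =>
      Finset.sum_congr rfl fun z1 _ => by ring
  rw [Finset.sum_congr rfl this, Finset.sum_comm]
  refine Finset.sum_congr rfl fun y0 _ => ?_
  rw [Finset.sum_comm]
  refine Finset.sum_congr rfl fun y1 _ => ?_
  rw [Finset.sum_comm]
  refine Finset.sum_congr rfl fun z0 _ => ?_
  rw [Finset.sum_comm]
  refine Finset.sum_congr rfl fun z1 _ => ?_
  rw [Finset.mul_sum]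

theorem q_step3 {α : Type} (X Y Z : Finset α) (f : α → α → α → ℝ) (F2 : α → α → ℝ) :
    (∑ y0 ∈ Y, ∑ y1 ∈ Y, ∑ z0 ∈ Z, ∑ z1 ∈ Z,
        (F2 y0 z0 * F2 y0 z1 * F2 y1 z0 * F2 y1 z1) *
        ∑ x ∈ X, f x y0 z0 * f x y0 z1 * f x y1 z0 * f x y1 z1) ^ 2 ≤
    (∑ y0 ∈ Y, ∑ y1 ∈ Y, ∑ z0 ∈ Z, ∑ z1 ∈ Z,
        (F2 y0 z0 * F2 y0 z1 * F2 y1 z0 * F2 y1 z1) ^ 2) *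
    ∑ x0 ∈ X, ∑ x1 ∈ X, ∑ y0 ∈ Y, ∑ y1 ∈ Y, ∑ z0 ∈ Z, ∑ z1 ∈ Z,
      f x0 y0 z0 * f x0 y0 z1 * f x0 y1 z0 * f x0 y1 z1 * f x1 y0 z0 * f x1 y0 z1 *
      f x1 y1 z0 * f x1 y1 z1 := by
  refine (q_cs4 Y Y Z Z _ _).trans (le_of_eq ?_)
  congr 1
  symm
  have a1 : ∀ (G : α → α → α → α → α → ℝ),
      ∑ x ∈ X, ∑ y0 ∈ Y, ∑ y1 ∈ Y, ∑ z0 ∈ Z, ∑ z1 ∈ Z, G x y0 y1 z0 z1 =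
      ∑ y0 ∈ Y, ∑ y1 ∈ Y, ∑ z0 ∈ Z, ∑ z1 ∈ Z, ∑ x ∈ X, G x y0 y1 z0 z1 := by
    intro G
    rw [Finset.sum_comm]
    refine Finset.sum_congr rfl fun y0 _ => ?_
    rw [Finset.sum_comm]
    refine Finset.sum_congr rfl fun y1 _ => ?_
    rw [Finset.sum_comm]
    refine Finset.sum_congr rfl fun z0 _ => ?_
    rw [Finset.sum_comm]
  rw [Finset.sum_congr rfl fun x _ => a1 _, a1]
  refine Finset.sum_congr rfl fun y0 _ => Finset.sum_congr rfl fun y1 _ =>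
    Finset.sum_congr rfl fun z0 _ => Finset.sum_congr rfl fun z1 _ => ?_
  rw [pow_two, Finset.sum_mul_sum]
  refine Finset.sum_congr rfl fun x0 _ => Finset.sum_congr rfl fun x1 _ => by ring

/-- Functional regularity. -/
theorem q_reg {α : Type} (E : Finset (α × α)) (X Y : Finset α) (n : ℕ) (hX : X.card = n)
    (hY : Y.card = n) (hE : E ⊆ X ×ˢ Y) (δ d : ℝ) (hd : bmDens E X Y = d) (hδ : 0 ≤ δ)
    (hreg : SzReg δ E X Y) (u v : α → ℝ) (hu : ∀ x, u x = 0 ∨ u x = 1)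
    (hv : ∀ x, v x = 0 ∨ v x = 1) :
    |∑ x ∈ X, ∑ y ∈ Y, qind E x y * u x * v y - d * (∑ x ∈ X, u x) * ∑ y ∈ Y, v y|
      ≤ δ * (n : ℝ) ^ 2 := by
  classical
  set A := X.filter fun x => u x = 1 with hA
  set B := Y.filter fun x => v x = 1 with hB
  have su : ∑ x ∈ X, u x = A.card := by
    rw [hA, Finset.card_filter]; push_cast
    refine Finset.sum_congr rfl fun x _ => ?_
    rcases hu x with h | h <;> simp [h]
  have sv : ∑ x ∈ Y, v x = B.card := by
    rw [hB, Finset.card_filter]; push_cast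
    refine Finset.sum_congr rfl fun x _ => ?_
    rcases hv x with h | h <;> simp [h]
  have se : ∑ x ∈ X, ∑ y ∈ Y, qind E x y * u x * v y = bmEdges E A B := by
    have : E.filter (fun p => p.1 ∈ A ∧ p.2 ∈ B) =
        (X ×ˢ Y).filter (fun p => p ∈ E ∧ u p.1 = 1 ∧ v p.2 = 1) := by
      ext p
      have := @hE p
      simp only [Finset.mem_filter, hA, hB, Finset.mem_product] at *
      tauto
    unfold bmEdges
    rw [this, Finset.card_filter, ← Finset.sum_product']
    push_cast
    refine Finset.sum_congr rfl fun p _ => ?_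
    unfold qind
    rcases hu p.1 with h | h <;> rcases hv p.2 with h' | h' <;> simp [h, h']
  have hAX : A ⊆ X := Finset.filter_subset _ _
  have hBY : B ⊆ Y := Finset.filter_subset _ _
  have hAn : (A.card : ℝ) ≤ n := by rw [← hX]; exact_mod_cast Finset.card_le_card hAX
  have hBn : (B.card : ℝ) ≤ n := by rw [← hY]; exact_mod_cast Finset.card_le_card hBY
  have eAB : ∀ A B : Finset α, (bmEdges E A B : ℝ) ≤ A.card * B.card := by
    intro A B
    have : bmEdges E A B ≤ (A ×ˢ B).card := by
      apply Finset.card_le_card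
      intro p hp
      simp only [Finset.mem_filter, Finset.mem_product] at *
      exact hp.2
    rw [Finset.card_product] at this
    exact_mod_cast this
  have hd0 : 0 ≤ d := by rw [← hd]; unfold bmDens; positivity
  have hd1 : d ≤ 1 := by
    rw [← hd]; unfold bmDens
    exact div_le_one_of_le₀ (eAB X Y) (by positivity)
  rw [su, sv, se]
  have a0 : (0:ℝ) ≤ A.card := by positivity
  have b0 : (0:ℝ) ≤ B.card := by positivity
  have n0 : (0:ℝ) ≤ n := by positivity
  have e0 : (0:ℝ) ≤ bmEdges E A B := by positivity
  have hab : (0:ℝ) ≤ A.card * B.card := by positivity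
  have small : (A.card * B.card : ℝ) ≤ δ * (n:ℝ)^2 →
      |(bmEdges E A B : ℝ) - d * A.card * B.card| ≤ δ * (n:ℝ)^2 := by
    intro h
    rw [abs_le]
    have h1 := eAB A B
    constructor <;> nlinarith
  by_cases ha : δ * (n:ℝ) ≤ A.card
  · by_cases hb : δ * (n:ℝ) ≤ B.card
    · have h := hreg A hAX B hBY (by rw [hX]; exact ha) (by rw [hY]; exact hb)
      rw [hd] at h
      rcases eq_or_lt_of_le hab with h0 | h0
      · exact small (by rw [← h0]; positivity)
      · have : (bmEdges E A B : ℝ) = bmDens E A B * (A.card * B.card) := by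
          unfold bmDens; rw [div_mul_cancel₀ _ h0.ne']
        rw [this, show bmDens E A B * (A.card * B.card) - d * A.card * B.card =
          (bmDens E A B - d) * (A.card * B.card : ℝ) by ring, abs_mul, abs_of_pos h0]
        have : (A.card * B.card : ℝ) ≤ n * n := mul_le_mul hAn hBn b0 n0
        calc _ ≤ δ * (n * n : ℝ) := mul_le_mul h this hab hδ
          _ = _ := by ring
    · push Not at hb
      apply small
      nlinarith [mul_le_mul hAn hb.le b0 n0]
  · push Not at ha
    apply small
    have : (A.card * B.card : ℝ) ≤ (δ * n) * n := mul_le_mul ha.le hBn b0 (by positivity)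
    nlinarith

/-- lower regularity for very dense graphs -/
theorem q_reg_dense {α : Type} (E : Finset (α × α)) (X Y : Finset α) (n : ℕ) (hX : X.card = n)
    (hY : Y.card = n) (d : ℝ) (hs : ∑ x ∈ X, ∑ y ∈ Y, qind E x y = d * (n:ℝ)^2)
    (hd1 : d ≤ 1) (u v : α → ℝ) (hu : ∀ x, u x = 0 ∨ u x = 1)
    (hv : ∀ x, v x = 0 ∨ v x = 1) :
    d * (∑ x ∈ X, u x) * (∑ y ∈ Y, v y) - (1 - d) * (n : ℝ) ^ 2 ≤
      ∑ x ∈ X, ∑ y ∈ Y, qind E x y * u x * v y := by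
  have h1 : ∑ x ∈ X, ∑ y ∈ Y, (qind E x y + u x * v y - 1) ≤
      ∑ x ∈ X, ∑ y ∈ Y, qind E x y * u x * v y := by
    refine Finset.sum_le_sum fun x _ => Finset.sum_le_sum fun y _ => ?_
    rcases qind_01 E x y with h | h <;> rcases hu x with h' | h' <;>
      rcases hv y with h'' | h'' <;> simp [h, h', h'']
  simp only [Finset.sum_add_distrib, Finset.sum_sub_distrib, hs, ← Finset.sum_mul_sum] at h1
  simp only [Finset.sum_const, hX, hY, nsmul_eq_mul, mul_one] at h1
  have u0 : 0 ≤ ∑ x ∈ X, u x := Finset.sum_nonneg fun x _ => by rcases hu x with h | h <;> simp [h]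
  have v0 : 0 ≤ ∑ x ∈ Y, v x := Finset.sum_nonneg fun x _ => by rcases hv x with h | h <;> simp [h]
  nlinarith [mul_nonneg u0 v0]

theorem q_cherry {α : Type} (X Z : Finset α) (g : α → α → ℝ) (n : ℕ) (hZ : Z.card = n)
    (d δ : ℝ) (h01 : ∀ x y, g x y = 0 ∨ g x y = 1)
    (hs : ∑ x ∈ X, ∑ z ∈ Z, g x z = d * (n:ℝ)^2)
    (hup : ∀ u v : α → ℝ, (∀ x, u x = 0 ∨ u x = 1) → (∀ x, v x = 0 ∨ v x = 1) →
      ∑ x ∈ X, ∑ z ∈ Z, g x z * u x * v z ≤ d * (∑ x ∈ X, u x) * (∑ z ∈ Z, v z) + δ * (n:ℝ)^2) :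
    ∑ x ∈ X, ∑ z0 ∈ Z, ∑ z1 ∈ Z, g x z0 * g x z1 ≤ d ^ 2 * (n:ℝ)^3 + δ * (n:ℝ)^3 := by
  rw [Finset.sum_comm]
  have h : ∀ z0 ∈ Z, ∑ x ∈ X, ∑ z1 ∈ Z, g x z0 * g x z1 ≤
      d * (∑ x ∈ X, g x z0) * n + δ * (n:ℝ)^2 := by
    intro z0 _
    have := hup (fun x => g x z0) (fun _ => 1) (fun x => h01 x z0) (fun _ => Or.inr rfl)
    simp only [Finset.sum_const, hZ, nsmul_eq_mul, mul_one] at this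
    refine le_trans (le_of_eq ?_) this
    refine Finset.sum_congr rfl fun x _ => Finset.sum_congr rfl fun y _ => by ring
  refine (Finset.sum_le_sum h).trans (le_of_eq ?_)
  rw [Finset.sum_add_distrib, ← Finset.sum_mul, ← Finset.mul_sum, Finset.sum_comm, hs]
  simp only [Finset.sum_const, hZ, nsmul_eq_mul]
  ring

theorem q_c4 {α : Type} (Y Z : Finset α) (g : α → α → ℝ) (n : ℕ) (hY : Y.card = n)
    (hZ : Z.card = n)
    (d δ : ℝ) (hd0 : 0 ≤ d) (hd1 : d ≤ 1) (hδ : 0 ≤ δ) (h01 : ∀ x y, g x y = 0 ∨ g x y = 1)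
    (hs : ∑ x ∈ Y, ∑ z ∈ Z, g x z = d * (n:ℝ)^2)
    (hup : ∀ u v : α → ℝ, (∀ x, u x = 0 ∨ u x = 1) → (∀ x, v x = 0 ∨ v x = 1) →
      ∑ x ∈ Y, ∑ z ∈ Z, g x z * u x * v z ≤ d * (∑ x ∈ Y, u x) * (∑ z ∈ Z, v z) + δ * (n:ℝ)^2) :
    ∑ y0 ∈ Y, ∑ y1 ∈ Y, ∑ z0 ∈ Z, ∑ z1 ∈ Z, g y0 z0 * g y0 z1 * g y1 z0 * g y1 z1 ≤
      d ^ 4 * (n:ℝ)^4 + 2 * δ * (n:ℝ)^4 := by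
  -- paths
  have hP : ∑ y0 ∈ Y, ∑ z0 ∈ Z, g y0 z0 * (∑ y ∈ Y, g y z0) * (∑ z ∈ Z, g y0 z) ≤
      d ^ 3 * (n:ℝ)^4 + δ * (n:ℝ)^4 := by
    have h : ∀ y1 ∈ Y, ∀ z1 ∈ Z, ∑ y ∈ Y, ∑ z ∈ Z, g y z * g y z1 * g y1 z ≤
        d * (∑ y ∈ Y, g y z1) * (∑ z ∈ Z, g y1 z) + δ * (n:ℝ)^2 := fun y1 _ z1 _ =>
      hup (fun y => g y z1) (fun z => g y1 z) (fun y => h01 y z1) (fun z => h01 y1 z)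
    have h2 := Finset.sum_le_sum fun y1 hy => Finset.sum_le_sum (h y1 hy)
    have e1 : ∑ y1 ∈ Y, ∑ z1 ∈ Z, ∑ y ∈ Y, ∑ z ∈ Z, g y z * g y z1 * g y1 z =
        ∑ y0 ∈ Y, ∑ z0 ∈ Z, g y0 z0 * (∑ y ∈ Y, g y z0) * (∑ z ∈ Z, g y0 z) := by
      rw [Finset.sum_congr rfl fun y1 _ => Finset.sum_comm, Finset.sum_comm]
      refine Finset.sum_congr rfl fun y0 _ => ?_
      rw [Finset.sum_congr rfl fun y1 _ => Finset.sum_comm, Finset.sum_comm]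
      refine Finset.sum_congr rfl fun z0 _ => ?_
      rw [mul_assoc, Finset.sum_mul_sum, Finset.mul_sum]
      refine Finset.sum_congr rfl fun y1 _ => ?_
      rw [Finset.mul_sum]
      refine Finset.sum_congr rfl fun y1 _ => by ring
    have e2 : ∑ y1 ∈ Y, ∑ z1 ∈ Z, (d * (∑ y ∈ Y, g y z1) * (∑ z ∈ Z, g y1 z) + δ * (n:ℝ)^2) =
        d ^ 3 * (n:ℝ)^4 + δ * (n:ℝ)^4 := by
      simp only [Finset.sum_add_distrib, ← Finset.sum_mul, ← Finset.mul_sum, Finset.sum_const, hY,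
        hZ, nsmul_eq_mul]
      rw [hs, Finset.sum_comm, hs]
      ring
    rw [e1, e2] at h2; exact h2
  have h : ∀ y0 ∈ Y, ∀ z0 ∈ Z, g y0 z0 * ∑ y ∈ Y, ∑ z ∈ Z, g y z * g y z0 * g y0 z ≤
        d * (g y0 z0 * (∑ y ∈ Y, g y z0) * (∑ z ∈ Z, g y0 z)) + δ * (n:ℝ)^2 := by
    intro y0 _ z0 _
    have := hup (fun y => g y z0) (fun z => g y0 z) (fun y => h01 y z0) (fun z => h01 y0 z)
    rcases h01 y0 z0 with h | h
    · rw [h]; simp; positivity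
    · rw [h]; linarith
  have h2 := Finset.sum_le_sum fun y1 hy => Finset.sum_le_sum (h y1 hy)
  have e1 : ∑ y0 ∈ Y, ∑ z0 ∈ Z, g y0 z0 * ∑ y ∈ Y, ∑ z ∈ Z, g y z * g y z0 * g y0 z =
      ∑ y0 ∈ Y, ∑ y1 ∈ Y, ∑ z0 ∈ Z, ∑ z1 ∈ Z, g y0 z0 * g y0 z1 * g y1 z0 * g y1 z1 := by
    refine Finset.sum_congr rfl fun y0 _ => ?_
    rw [Finset.sum_comm (s := Y) (t := Z)]
    refine Finset.sum_congr rfl fun z0 _ => ?_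
    rw [Finset.mul_sum]
    refine Finset.sum_congr rfl fun y1 _ => ?_
    rw [Finset.mul_sum]
    refine Finset.sum_congr rfl fun z1 _ => by ring
  have e2 : ∑ y0 ∈ Y, ∑ z0 ∈ Z,
      (d * (g y0 z0 * (∑ y ∈ Y, g y z0) * (∑ z ∈ Z, g y0 z)) + δ * (n:ℝ)^2) =
      d * (∑ y0 ∈ Y, ∑ z0 ∈ Z, g y0 z0 * (∑ y ∈ Y, g y z0) * (∑ z ∈ Z, g y0 z)) +
        δ * (n:ℝ)^4 := by
    simp only [Finset.sum_add_distrib, ← Finset.mul_sum, Finset.sum_const, hY,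
        hZ, nsmul_eq_mul]
    ring
  rw [e1, e2] at h2
  have h3 := mul_le_mul_of_nonneg_left hP hd0
  have h4 : d * (δ * (n:ℝ)^4) ≤ δ * (n:ℝ)^4 := mul_le_of_le_one_left (by positivity) hd1
  nlinarith

theorem q_tri {α : Type} (X Y Z : Finset α) (g0 g1 g2 : α → α → ℝ) (n : ℕ) (hX : X.card = n)
    (hY : Y.card = n) (hZ : Z.card = n)
    (d η : ℝ) (hd0 : 0 ≤ d) (hd1 : d ≤ 1) (hη : 0 ≤ η) (h010 : ∀ x y, g0 x y = 0 ∨ g0 x y = 1)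
    (h011 : ∀ x y, g1 x y = 0 ∨ g1 x y = 1)
    (hs : ∑ x ∈ X, ∑ y ∈ Y, g0 x y = d * (n:ℝ)^2)
    (hlo1 : ∀ u v : α → ℝ, (∀ x, u x = 0 ∨ u x = 1) → (∀ x, v x = 0 ∨ v x = 1) →
      d * (∑ x ∈ X, u x) * (∑ z ∈ Z, v z) - η * (n:ℝ)^2 ≤ ∑ x ∈ X, ∑ z ∈ Z, g1 x z * u x * v z)
    (hlo2 : ∀ u v : α → ℝ, (∀ x, u x = 0 ∨ u x = 1) → (∀ x, v x = 0 ∨ v x = 1) →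
      d * (∑ x ∈ Y, u x) * (∑ z ∈ Z, v z) - η * (n:ℝ)^2 ≤ ∑ x ∈ Y, ∑ z ∈ Z, g2 x z * u x * v z) :
    d ^ 3 * (n:ℝ)^3 - 2 * η * (n:ℝ)^3 ≤
      ∑ x ∈ X, ∑ y ∈ Y, ∑ z ∈ Z, g0 x y * g1 x z * g2 y z := by
  have hc : d ^ 2 * (n:ℝ)^3 - η * (n:ℝ)^3 ≤ ∑ x ∈ X, (∑ y ∈ Y, g0 x y) * ∑ z ∈ Z, g1 x z := by
    have h : ∀ y ∈ Y, d * (∑ x ∈ X, g0 x y) * n - η * (n:ℝ)^2 ≤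
        ∑ x ∈ X, ∑ z ∈ Z, g1 x z * g0 x y := by
      intro y _
      have := hlo1 (fun x => g0 x y) (fun _ => 1) (fun x => h010 x y) (fun _ => Or.inr rfl)
      simpa only [Finset.sum_const, hZ, nsmul_eq_mul, mul_one] using this
    have h2 := Finset.sum_le_sum h
    rw [Finset.sum_sub_distrib, ← Finset.sum_mul, ← Finset.mul_sum, Finset.sum_comm, hs] at h2
    rw [Finset.sum_comm (s := Y) (t := X)] at h2
    simp only [Finset.sum_const, hY, nsmul_eq_mul] at h2
    have e : ∑ x ∈ X, ∑ y ∈ Y, ∑ z ∈ Z, g1 x z * g0 x y =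
        ∑ x ∈ X, (∑ y ∈ Y, g0 x y) * ∑ z ∈ Z, g1 x z := by
      refine Finset.sum_congr rfl fun x _ => ?_
      rw [Finset.sum_mul_sum]
      refine Finset.sum_congr rfl fun y _ => Finset.sum_congr rfl fun z _ => by ring
    rw [e] at h2
    linarith
  have h : ∀ x ∈ X, d * ((∑ y ∈ Y, g0 x y) * ∑ z ∈ Z, g1 x z) - η * (n:ℝ)^2 ≤
      ∑ y ∈ Y, ∑ z ∈ Z, g0 x y * g1 x z * g2 y z := by
    intro x _
    have := hlo2 (fun y => g0 x y) (fun z => g1 x z) (h010 x) (h011 x)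
    rw [← mul_assoc]
    refine this.trans (le_of_eq ?_)
    refine Finset.sum_congr rfl fun y _ => Finset.sum_congr rfl fun z _ => by ring
  have h2 := Finset.sum_le_sum h
  rw [Finset.sum_sub_distrib, ← Finset.mul_sum] at h2
  simp only [Finset.sum_const, hX, nsmul_eq_mul] at h2
  have h3 := mul_le_mul_of_nonneg_left hc hd0
  have h4 : d * (η * (n:ℝ)^3) ≤ η * (n:ℝ)^3 := mul_le_of_le_one_left (by positivity) hd1
  nlinarith

theorem q_mem_tri {α : Type} [DecidableEq α] (e1 e2 e3 : Finset (α × α)) (x y z : α) :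
    (x, y, z) ∈ tri e1 e2 e3 ↔ (x, y) ∈ e1 ∧ (x, z) ∈ e2 ∧ (y, z) ∈ e3 := by
  unfold tri
  simp only [Finset.mem_image, Finset.mem_filter, Finset.mem_product, Prod.exists, Prod.mk.injEq]
  constructor
  · rintro ⟨a, b, c, d, ⟨⟨h1, h2⟩, h3, h4⟩, rfl, rfl, rfl⟩
    subst h3
    exact ⟨h1, h4, h2⟩
  · rintro ⟨h1, h2, h3⟩
    exact ⟨x, y, y, z, ⟨⟨h1, h3⟩, rfl, h2⟩, rfl, rfl, rfl⟩

theorem q_sum_tri {α : Type} [DecidableEq α] (X Y Z : Finset α) (f1 f2 f3 : Finset (α × α))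
    (h1 : f1 ⊆ X ×ˢ Y) (h2 : f2 ⊆ X ×ˢ Z) (G : α → α → α → ℝ) :
    ∑ p ∈ tri f1 f2 f3, G p.1 p.2.1 p.2.2 =
      ∑ x ∈ X, ∑ y ∈ Y, ∑ z ∈ Z, G x y z * qind f1 x y * qind f2 x z * qind f3 y z := by
  have e : tri f1 f2 f3 = (X ×ˢ Y ×ˢ Z).filter fun p => p ∈ tri f1 f2 f3 := by
    ext ⟨x, y, z⟩
    simp only [Finset.mem_filter, Finset.mem_product, q_mem_tri]
    refine ⟨fun h => ⟨?_, h⟩, fun h => h.2⟩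
    have a := Finset.mem_product.1 (h1 h.1)
    have b := Finset.mem_product.1 (h2 h.2.1)
    exact ⟨a.1, a.2, b.2⟩
  rw [e, Finset.sum_filter, Finset.sum_product]
  refine Finset.sum_congr rfl fun x _ => ?_
  rw [Finset.sum_product]
  refine Finset.sum_congr rfl fun y _ => Finset.sum_congr rfl fun z _ => ?_
  simp only [q_mem_tri]
  unfold qind
  by_cases a : (x, y) ∈ f1 <;> by_cases b : (x, z) ∈ f2 <;> by_cases c : (y, z) ∈ f3 <;>
    simp [a, b, c]

theorem q_qind_mono {α : Type} {f e : Finset (α × α)} (h : f ⊆ e) (x y : α) :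
    qind f x y ≤ qind e x y := by
  unfold qind
  by_cases a : (x, y) ∈ f
  · simp [a, h a]
  · simp only [a, if_false]; split_ifs <;> norm_num

theorem q_qind_nonneg {α : Type} (f : Finset (α × α)) (x y : α) : 0 ≤ qind f x y := by
  rcases qind_01 f x y with h | h <;> simp [h]

theorem q_qind_sq {α : Type} (f : Finset (α × α)) (x y : α) : qind f x y ^ 2 = qind f x y := by
  rcases qind_01 f x y with h | h <;> simp [h]

theorem q_edge_sum {α : Type} (E : Finset (α × α)) (X Y : Finset α) (n : ℕ) (hX : X.card = n)
    (hY : Y.card = n) (hn : 0 < n) (hE : E ⊆ X ×ˢ Y) :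
    ∑ x ∈ X, ∑ y ∈ Y, qind E x y = bmDens E X Y * (n:ℝ)^2 := by
  classical
  have hn' : (n:ℝ) ≠ 0 := by positivity
  have : bmDens E X Y * (n:ℝ)^2 = bmEdges E X Y := by
    unfold bmDens; rw [hX, hY]; field_simp
  rw [this]
  have : E.filter (fun p => p.1 ∈ X ∧ p.2 ∈ Y) = (X ×ˢ Y).filter (fun p => p ∈ E) := by
    ext p
    simp only [Finset.mem_filter, Finset.mem_product]
    tauto
  unfold bmEdges
  rw [this, Finset.card_filter, ← Finset.sum_product']
  push_cast
  rfl

set_option maxHeartbeats 2000000 in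
theorem q_main {α : Type} [DecidableEq α] (H : Finset (α × α × α))
    (X Y Z : Finset α) (E0 E1 E2 : Finset (α × α)) (n : ℕ) (hX : X.card = n) (hY : Y.card = n)
    (hZ : Z.card = n) (hE0 : E0 ⊆ X ×ˢ Y) (hE1 : E1 ⊆ X ×ˢ Z) (hE2 : E2 ⊆ Y ×ˢ Z)
    (d : ℝ) (hd0 : bmDens E0 X Y = d) (hd1 : bmDens E1 X Z = d) (hd2 : bmDens E2 Y Z = d)
    (ε : ℝ) (hε : 0 < ε) (hε2 : ε ≤ 1 / 2)
    (hQ : octSum H E0 E1 E2 X Y Z ≤ ε ^ 30 * d ^ 12 * (n : ℝ) ^ 6)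
    (r1 : SzReg (d ^ 30) E1 X Z) (r2 : SzReg (d ^ 30) E2 Y Z) :
    TriadReg ε H E0 E1 E2 := by
  intro f0 hf0 f1 hf1 f2 hf2 ht
  have hsub : tri f0 f1 f2 ⊆ tri E0 E1 E2 := by
    rintro ⟨x, y, z⟩ h
    rw [q_mem_tri] at *
    exact ⟨hf0 h.1, hf1 h.2.1, hf2 h.2.2⟩
  rcases Finset.eq_empty_or_nonempty (tri E0 E1 E2) with h0 | ⟨⟨x, y, z⟩, hp⟩
  · have : tri f0 f1 f2 = ∅ := Finset.subset_empty.1 (h0 ▸ hsub)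
    unfold triDens
    rw [h0, this]
    simp [hε.le]
  rw [q_mem_tri] at hp
  have hxX := (Finset.mem_product.1 (hE0 hp.1)).1
  have hn : 0 < n := by rw [← hX]; exact Finset.card_pos.2 ⟨x, hxX⟩
  have hnR : (0:ℝ) < n := by exact_mod_cast hn
  have s0 := q_edge_sum E0 X Y n hX hY hn hE0
  have s1 := q_edge_sum E1 X Z n hX hZ hn hE1
  have s2 := q_edge_sum E2 Y Z n hY hZ hn hE2
  rw [hd0] at s0
  rw [hd1] at s1
  rw [hd2] at s2
  have hdpos : 0 < d := by
    have hy := (Finset.mem_product.1 (hE0 hp.1)).2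
    have a1 : qind E0 x y ≤ ∑ y ∈ Y, qind E0 x y :=
      Finset.single_le_sum (f := fun y => qind E0 x y) (fun i _ => q_qind_nonneg E0 x i) hy
    have a2 : ∑ y ∈ Y, qind E0 x y ≤ ∑ x ∈ X, ∑ y ∈ Y, qind E0 x y :=
      Finset.single_le_sum (f := fun x => ∑ y ∈ Y, qind E0 x y)
        (fun i _ => Finset.sum_nonneg fun j _ => q_qind_nonneg E0 i j) hxX
    have a3 : qind E0 x y = 1 := by unfold qind; simp [hp.1]
    rw [s0, ] at a2
    have : 0 < d * (n:ℝ)^2 := by linarith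
    exact pos_of_mul_pos_left this (by positivity)
  have hdle : d ≤ 1 := by
    have : ∑ x ∈ X, ∑ y ∈ Y, qind E0 x y ≤ ∑ x ∈ X, ∑ y ∈ Y, (1:ℝ) :=
      Finset.sum_le_sum fun x _ => Finset.sum_le_sum fun y _ => by
        rcases qind_01 E0 x y with h | h <;> simp [h]
    rw [s0] at this
    simp only [Finset.sum_const, hX, hY, nsmul_eq_mul, mul_one] at this
    have h2 : 0 < (n:ℝ)^2 := by positivity
    nlinarith
  have R1 := q_reg E1 X Z n hX hZ hE1 _ d hd1 (by positivity) r1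
  have R2 := q_reg E2 Y Z n hY hZ hE2 _ d hd2 (by positivity) r2
  have hδ4 : d ^ 30 ≤ d ^ 4 := pow_le_pow_of_le_one hdpos.le hdle (by norm_num)
  have hδ2 : d ^ 30 ≤ d ^ 2 := pow_le_pow_of_le_one hdpos.le hdle (by norm_num)
  have hA : ∑ x ∈ X, ∑ z0 ∈ Z, ∑ z1 ∈ Z, qind E1 x z0 * qind E1 x z1 ≤ 2 * d ^ 2 * (n:ℝ)^3 := by
    have := q_cherry X Z (qind E1) n hZ d (d ^ 30) (qind_01 E1) s1
      (fun u v hu hv => by have := (abs_le.1 (R1 u v hu hv)).2; linarith)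
    have h2 := mul_le_mul_of_nonneg_right hδ2 (show 0 ≤ (n:ℝ)^3 by positivity)
    linarith
  have hC : ∑ y0 ∈ Y, ∑ y1 ∈ Y, ∑ z0 ∈ Z, ∑ z1 ∈ Z,
      qind E2 y0 z0 * qind E2 y0 z1 * qind E2 y1 z0 * qind E2 y1 z1 ≤ 3 * d ^ 4 * (n:ℝ)^4 := by
    have := q_c4 Y Z (qind E2) n hY hZ d (d ^ 30) hdpos.le hdle (by positivity) (qind_01 E2) s2
      (fun u v hu hv => by have := (abs_le.1 (R2 u v hu hv)).2; linarith)
    have h2 := mul_le_mul_of_nonneg_right hδ4 (show 0 ≤ (n:ℝ)^4 by positivity)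
    linarith
  have tcard : ∀ g0 g1 g2 : Finset (α × α), g0 ⊆ E0 → g1 ⊆ E1 →
      ((tri g0 g1 g2).card : ℝ) =
        ∑ x ∈ X, ∑ y ∈ Y, ∑ z ∈ Z, qind g0 x y * qind g1 x z * qind g2 y z := by
    intro g0 g1 g2 h0 h1
    have := q_sum_tri X Y Z g0 g1 g2 (h0.trans hE0) (h1.trans hE1) (fun _ _ _ => 1)
    simpa using this
  have hT : d ^ 3 * (n:ℝ)^3 / 2 ≤ (tri E0 E1 E2).card := by
    rw [tcard E0 E1 E2 (Finset.Subset.refl _) (Finset.Subset.refl _)]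
    have n3 : 0 ≤ (n:ℝ)^3 := by positivity
    rcases le_total d (9/10) with hd | hd
    · have := q_tri X Y Z (qind E0) (qind E1) (qind E2) n hX hY hZ d (d ^ 30) hdpos.le hdle
        (by positivity) (qind_01 E0) (qind_01 E1) s0
        (fun u v hu hv => by have := (abs_le.1 (R1 u v hu hv)).1; linarith)
        (fun u v hu hv => by have := (abs_le.1 (R2 u v hu hv)).1; linarith)
      have h27 : d ^ 27 ≤ 1 / 4 :=
        (pow_le_pow_left₀ hdpos.le hd 27).trans (by norm_num)
      have : d ^ 30 ≤ d ^ 3 / 4 := by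
        have : d ^ 30 = d ^ 3 * d ^ 27 := by ring
        have h3 : 0 < d ^ 3 := by positivity
        nlinarith
      nlinarith [mul_le_mul_of_nonneg_right this n3]
    · have := q_tri X Y Z (qind E0) (qind E1) (qind E2) n hX hY hZ d (1 - d) hdpos.le hdle
        (by linarith) (qind_01 E0) (qind_01 E1) s0
        (q_reg_dense E1 X Z n hX hZ d s1 hdle)
        (q_reg_dense E2 Y Z n hY hZ d s2 hdle)
      have h3 : (9/10:ℝ)^3 ≤ d ^ 3 := pow_le_pow_left₀ (by norm_num) hd 3
      have : 1 - d ≤ d ^ 3 / 4 := by norm_num at h3; linarith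
      nlinarith [mul_le_mul_of_nonneg_right this n3]
  -- the main sum
  set D := triDens H E0 E1 E2 with hD
  have hS : ∑ x ∈ X, ∑ y ∈ Y, ∑ z ∈ Z,
      fQ H E0 E1 E2 x y z * qind f0 x y * qind f1 x z * qind f2 y z =
      (triDens H f0 f1 f2 - D) * (tri f0 f1 f2).card := by
    rw [← q_sum_tri X Y Z f0 f1 f2 (hf0.trans hE0) (hf1.trans hE1) (fQ H E0 E1 E2)]
    have : ∀ p ∈ tri f0 f1 f2, fQ H E0 E1 E2 p.1 p.2.1 p.2.2 = (if p ∈ H then 1 else 0) - D := by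
      rintro ⟨x, y, z⟩ hp
      unfold fQ
      rw [if_pos (hsub hp)]
      split_ifs <;> simp [hD]
    rw [Finset.sum_congr rfl this, Finset.sum_sub_distrib, Finset.sum_const, nsmul_eq_mul]
    have h2 : ∑ p ∈ tri f0 f1 f2, (if p ∈ H then (1:ℝ) else 0) = (H ∩ tri f0 f1 f2).card := by
      rw [Finset.inter_comm, ← Finset.filter_mem_eq_inter, Finset.card_filter]
      push_cast
      rfl
    rw [h2]
    unfold triDens
    rcases Nat.eq_zero_or_pos (tri f0 f1 f2).card with h | h
    · have : tri f0 f1 f2 = ∅ := Finset.card_eq_zero.1 h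
      simp [this]
    · have : ((tri f0 f1 f2).card : ℝ) ≠ 0 := by positivity
      field_simp
  set S := ∑ x ∈ X, ∑ y ∈ Y, ∑ z ∈ Z,
      fQ H E0 E1 E2 x y z * qind f0 x y * qind f1 x z * qind f2 y z with hSdef
  have p1 := q_step1 X Y Z (fQ H E0 E1 E2) (qind f0) (qind f1) (qind f2)
  have p2 := q_step2 X Y Z (fQ H E0 E1 E2) (qind f1) (qind f2)
  have p3 := q_step3 X Y Z (fQ H E0 E1 E2) (qind f2)
  rw [← hSdef] at p1
  have p3' : (∑ y0 ∈ Y, ∑ y1 ∈ Y, ∑ z0 ∈ Z, ∑ z1 ∈ Z,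
        (qind f2 y0 z0 * qind f2 y0 z1 * qind f2 y1 z0 * qind f2 y1 z1) ^ 2) ≤
        3 * d ^ 4 * (n:ℝ)^4 := by
    refine le_trans ?_ hC
    refine Finset.sum_le_sum fun y0 _ => Finset.sum_le_sum fun y1 _ =>
      Finset.sum_le_sum fun z0 _ => Finset.sum_le_sum fun z1 _ => ?_
    simp only [mul_pow, q_qind_sq]
    have := q_qind_mono hf2
    have h0 := q_qind_nonneg f2
    have h0' := q_qind_nonneg E2
    gcongr <;> first | apply this | apply h0 | skip
    all_goals first | exact mul_nonneg (h0 _ _) (h0 _ _) | exact mul_nonneg (mul_nonneg (h0 _ _) (h0 _ _)) (h0 _ _) | exact mul_nonneg (h0' _ _) (h0' _ _) | exact mul_nonneg (mul_nonneg (h0' _ _) (h0' _ _)) (h0' _ _) | exact h0' _ _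
  have p2' : (∑ x ∈ X, ∑ z0 ∈ Z, ∑ z1 ∈ Z, (qind f1 x z0 * qind f1 x z1) ^ 2) ≤
      2 * d ^ 2 * (n:ℝ)^3 := by
    refine le_trans ?_ hA
    refine Finset.sum_le_sum fun y0 _ => Finset.sum_le_sum fun y1 _ =>
      Finset.sum_le_sum fun z0 _ => ?_
    simp only [mul_pow, q_qind_sq]
    exact mul_le_mul (q_qind_mono hf1 _ _) (q_qind_mono hf1 _ _) (q_qind_nonneg _ _ _)
      (q_qind_nonneg _ _ _)
  have p1' : (∑ x ∈ X, ∑ y ∈ Y, qind f0 x y ^ 2) ≤ d * (n:ℝ)^2 := by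
    rw [← s0]
    refine Finset.sum_le_sum fun y0 _ => Finset.sum_le_sum fun y1 _ => ?_
    rw [q_qind_sq]
    exact q_qind_mono hf0 _ _
  have hO : 0 ≤ ε ^ 30 * d ^ 12 * (n : ℝ) ^ 6 := by positivity
  unfold octSum at hQ
  have q3 := p3.trans ((mul_le_mul_of_nonneg_left hQ (Finset.sum_nonneg fun y0 _ =>
    Finset.sum_nonneg fun y1 _ => Finset.sum_nonneg fun z0 _ => Finset.sum_nonneg fun z1 _ =>
      sq_nonneg _)).trans (mul_le_mul_of_nonneg_right p3' hO))
  generalize (∑ y0 ∈ Y, ∑ y1 ∈ Y, ∑ z0 ∈ Z, ∑ z1 ∈ Z,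
        (qind f2 y0 z0 * qind f2 y0 z1 * qind f2 y1 z0 * qind f2 y1 z1) *
        ∑ x ∈ X, fQ H E0 E1 E2 x y0 z0 * fQ H E0 E1 E2 x y0 z1 * fQ H E0 E1 E2 x y1 z0 *
          fQ H E0 E1 E2 x y1 z1) = T2 at p2 q3
  generalize (∑ x ∈ X, ∑ z0 ∈ Z, ∑ z1 ∈ Z, (qind f1 x z0 * qind f1 x z1) *
        ∑ y ∈ Y, fQ H E0 E1 E2 x y z0 * fQ H E0 E1 E2 x y z1 * (qind f2 y z0 * qind f2 y z1))
        = T1 at p1 p2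
  have w2 : 0 ≤ ∑ x ∈ X, ∑ z0 ∈ Z, ∑ z1 ∈ Z, (qind f1 x z0 * qind f1 x z1) ^ 2 :=
    Finset.sum_nonneg fun _ _ => Finset.sum_nonneg fun _ _ => Finset.sum_nonneg fun _ _ =>
      sq_nonneg _
  have w1 : 0 ≤ ∑ x ∈ X, ∑ y ∈ Y, qind f0 x y ^ 2 :=
    Finset.sum_nonneg fun _ _ => Finset.sum_nonneg fun _ _ => sq_nonneg _
  generalize (∑ x ∈ X, ∑ z0 ∈ Z, ∑ z1 ∈ Z, (qind f1 x z0 * qind f1 x z1) ^ 2) = a2 at *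
  generalize (∑ x ∈ X, ∑ y ∈ Y, qind f0 x y ^ 2) = a1 at *
  have k1 : S ^ 4 ≤ (d * (n:ℝ)^2) ^ 2 * T1 ^ 2 := by
    calc S ^ 4 = (S ^ 2) ^ 2 := by ring
      _ ≤ (a1 * T1) ^ 2 := pow_le_pow_left₀ (sq_nonneg _) p1 2
      _ = a1 ^ 2 * T1 ^ 2 := by ring
      _ ≤ _ := mul_le_mul_of_nonneg_right (pow_le_pow_left₀ w1 p1' 2) (sq_nonneg _)
  have k2 : T1 ^ 4 ≤ (2 * d ^ 2 * (n:ℝ)^3) ^ 2 * T2 ^ 2 := by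
    calc T1 ^ 4 = (T1 ^ 2) ^ 2 := by ring
      _ ≤ (a2 * T2) ^ 2 := pow_le_pow_left₀ (sq_nonneg _) p2 2
      _ = a2 ^ 2 * T2 ^ 2 := by ring
      _ ≤ _ := mul_le_mul_of_nonneg_right (pow_le_pow_left₀ w2 p2' 2) (sq_nonneg _)
  have k3 : S ^ 8 ≤ 12 * ε ^ 30 * (d ^ 3 * (n:ℝ)^3) ^ 8 := by
    calc S ^ 8 = (S ^ 4) ^ 2 := by ring
      _ ≤ ((d * (n:ℝ)^2) ^ 2 * T1 ^ 2) ^ 2 := pow_le_pow_left₀ (by positivity) k1 2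
      _ = (d * (n:ℝ)^2) ^ 4 * T1 ^ 4 := by ring
      _ ≤ (d * (n:ℝ)^2) ^ 4 * ((2 * d ^ 2 * (n:ℝ)^3) ^ 2 * T2 ^ 2) :=
        mul_le_mul_of_nonneg_left k2 (by positivity)
      _ ≤ (d * (n:ℝ)^2) ^ 4 * ((2 * d ^ 2 * (n:ℝ)^3) ^ 2 *
          (3 * d ^ 4 * (n:ℝ)^4 * (ε ^ 30 * d ^ 12 * (n : ℝ) ^ 6))) := by
        gcongr
      _ = _ := by ring
  by_contra hcon
  push Not at hcon
  have m : 0 < d ^ 3 * (n:ℝ)^3 := by positivity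
  have tpos : ε * (d ^ 3 * (n:ℝ)^3 / 2) ≤ (tri f0 f1 f2).card :=
    (mul_le_mul_of_nonneg_left hT hε.le).trans ht
  have l1 : ε * (ε * (d ^ 3 * (n:ℝ)^3 / 2)) < |S| := by
    rw [hS, abs_mul, abs_of_nonneg (by positivity : (0:ℝ) ≤ (tri f0 f1 f2).card)]
    exact mul_lt_mul hcon tpos (by positivity) (abs_nonneg _)
  have l2 := pow_lt_pow_left₀ l1 (by positivity) (n := 8) (by norm_num)
  rw [(by decide : Even 8).pow_abs] at l2
  have l3 : ε ^ 14 ≤ 1 / 3072 := (pow_le_pow_left₀ hε.le hε2 14).trans (by norm_num)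
  have l4 : 12 * ε ^ 30 * (d ^ 3 * (n:ℝ)^3) ^ 8 ≤ (ε * (ε * (d ^ 3 * (n:ℝ)^3 / 2))) ^ 8 := by
    have : 12 * ε ^ 30 * (d ^ 3 * (n:ℝ)^3) ^ 8 =
      (ε ^ 16 * (d ^ 3 * (n:ℝ)^3) ^ 8) * (12 * ε ^ 14) := by ring
    rw [this]
    have h5 : (ε * (ε * (d ^ 3 * (n:ℝ)^3 / 2))) ^ 8 =
      (ε ^ 16 * (d ^ 3 * (n:ℝ)^3) ^ 8) * (1 / 256) := by ring
    rw [h5]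
    exact mul_le_mul_of_nonneg_left (by linarith) (by positivity)
  linarith


/-- **Proposition 4.7.** Quasirandomness implies triad regularity. -/
theorem quasirandom_implies_triad_regular :
    ∃ C : ℝ, 1 ≤ C ∧
      ∀ (α : Type) [inst : DecidableEq α] (H : Finset (α × α × α))
        (X Y Z : Finset α) (E0 E1 E2 : Finset (α × α)),
        Disjoint X Y → Disjoint X Z → Disjoint Y Z →
        X.card = Y.card → Y.card = Z.card →
        E0 ⊆ X ×ˢ Y → E1 ⊆ X ×ˢ Z → E2 ⊆ Y ×ˢ Z →
        bmDens E0 X Y = bmDens E1 X Z → bmDens E1 X Z = bmDens E2 Y Z →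
        ∀ ε : ℝ, 0 < ε → ε ≤ 1 / 2 →
          Quasirandom (ε ^ C) H E0 E1 E2 X Y Z →
          SzReg (bmDens E0 X Y ^ C) E0 X Y →
          SzReg (bmDens E1 X Z ^ C) E1 X Z →
          SzReg (bmDens E2 Y Z ^ C) E2 Y Z →
          TriadReg ε H E0 E1 E2 := by
  refine ⟨30, by norm_num, ?_⟩
  intro α inst H X Y Z E0 E1 E2 _ _ _ hXY hYZ hE0 hE1 hE2 h01 h12 ε hε hε2 hQ _ r1 r2
  have c : ∀ t : ℝ, t ^ (30 : ℝ) = t ^ 30 := fun t => by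
    rw [← Real.rpow_natCast]; norm_num
  rw [c] at hQ r1 r2
  exact q_main H X Y Z E0 E1 E2 X.card rfl hXY.symm (hXY.trans hYZ).symm hE0 hE1 hE2
    (bmDens E0 X Y) rfl h01.symm (h01.trans h12).symm ε hε hε2
    (hQ _ _ rfl h01.symm (h01.trans h12).symm rfl hXY.symm (hXY.trans hYZ).symm)
    (h01 ▸ r1) ((h01.trans h12) ▸ r2)
end
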